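/- For the linear Fokker–Planck operator L f = Δ_v f + (1/4)(2d − |v|²) f on L²_v(ℝ^d), there exists a constant λ₀ > 0 such that −⟨L f, f⟩ ≥ λ₀ |{I − P₀} f|²_μ for all suitable f, where P₀ f = a^f √M with a^f = ⟨√M, f⟩. -/

import Mathlib

open MeasureTheory Real RealInnerProductSpace

noncomputable section

/-- `Ed d` is Euclidean space `ℝ^d`. -/
abbrev Ed (d : ℕ) := EuclideanSpace ℝ (Fin d)

/-- The global Maxwellian `M(v) = (2π)^{-d/2} exp(-|v|²/2)`. -/
def maxw (d : ℕ) (v : Ed d) : ℝ := (2 * π) ^ (-(d : ℝ) / 2) * Real.exp (-‖v‖ ^ 2 / 2)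

/-- `√M`. -/
def sqrtM (d : ℕ) (v : Ed d) : ℝ := Real.sqrt (maxw d v)

/-- macroscopic density `a(x) = ∫ √M f dv`. -/
def macroA (d : ℕ) (f : Ed d → Ed d → ℝ) (x : Ed d) : ℝ := ∫ v : Ed d, sqrtM d v * f x v

/-- macroscopic momentum `b(x) = ∫ v √M f dv`. -/
def macroB (d : ℕ) (f : Ed d → Ed d → ℝ) (x : Ed d) : Ed d :=
  ∫ v : Ed d, (sqrtM d v * f x v) • v

/-- local averaged velocity `u_F = b/(1+a)`. -/
def uF (d : ℕ) (f : Ed d → Ed d → ℝ) (x : Ed d) : Ed d :=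
  (1 + macroA d f x)⁻¹ • macroB d f x

/-- the projection `P f = (a + b·v)√M`. -/
def projP (d : ℕ) (f : Ed d → Ed d → ℝ) (x v : Ed d) : ℝ :=
  (macroA d f x + ⟪macroB d f x, v⟫) * sqrtM d v

/-- the microscopic part `{I - P} f`. -/
def IminusP (d : ℕ) (f : Ed d → Ed d → ℝ) : Ed d → Ed d → ℝ :=
  fun x v => f x v - projP d f x v

/-- Laplacian in the velocity variable. -/
def lapv (d : ℕ) (g : Ed d → ℝ) (v : Ed d) : ℝ :=
  ∑ i : Fin d,
    fderiv ℝ (fun w => fderiv ℝ g w (EuclideanSpace.single i 1)) v (EuclideanSpace.single i 1)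

/-- the linear Fokker–Planck operator `L g = Δ_v g + (1/4)(2d - |v|²) g`. -/
def fpL (d : ℕ) (g : Ed d → ℝ) (v : Ed d) : ℝ :=
  lapv d g v + (1 / 4) * (2 * (d : ℝ) - ‖v‖ ^ 2) * g v

/-- the nonlinear term `Γ = u·((1/2) v f + v √M)` evaluated pointwise. -/
def gammaTerm (d : ℕ) (u : Ed d) (fv : ℝ) (v : Ed d) : ℝ :=
  ⟪u, ((1 / 2) * fv) • v + sqrtM d v • v⟫

/-- `f` solves at time `t` the equation linearized along `fb`:
`∂_t f + v·∇_x f + u_{F̄}·∇_v f = L f + Γ(f̄,f)`. -/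
def SolvesLin (d : ℕ) (fb f : ℝ → Ed d → Ed d → ℝ) (t : ℝ) : Prop :=
  ∀ x v : Ed d,
    deriv (fun τ => f τ x v) t
      + fderiv ℝ (fun y => f t y v) x v
      + fderiv ℝ (fun w => f t x w) v (uF d (fb t) x)
    = fpL d (fun w => f t x w) v + gammaTerm d (uF d (fb t) x) (f t x v) v

/-- `f` solves the perturbed Vlasov–Fokker–Planck equation at time `t`. -/
def SolvesVFP (d : ℕ) (f : ℝ → Ed d → Ed d → ℝ) (t : ℝ) : Prop :=
  SolvesLin d f f t

/-- regularity part of being a classical solution on `[0,T]`. -/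
def ClassicalReg (d : ℕ) (f : ℝ → Ed d → Ed d → ℝ) (T : ℝ) : Prop :=
  ContinuousOn (fun p : ℝ × Ed d × Ed d => f p.1 p.2.1 p.2.2) {p | p.1 ∈ Set.Icc 0 T} ∧
  (∀ t ∈ Set.Icc (0 : ℝ) T, ContDiff ℝ 2 (fun p : Ed d × Ed d => f t p.1 p.2)) ∧
  (∀ x v : Ed d, ∀ t ∈ Set.Ioo (0 : ℝ) T, DifferentiableAt ℝ (fun τ => f τ x v) t)

/-- classical solution of the nonlinear equation on `[0,T]`. -/
def IsClassicalSolutionOn (d : ℕ) (f : ℝ → Ed d → Ed d → ℝ) (T : ℝ) : Prop :=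
  ClassicalReg d f T ∧ ∀ t ∈ Set.Ioo (0 : ℝ) T, SolvesVFP d f t

/-- regularity part of being a global classical solution. -/
def GlobalClassicalReg (d : ℕ) (f : ℝ → Ed d → Ed d → ℝ) : Prop :=
  ContinuousOn (fun p : ℝ × Ed d × Ed d => f p.1 p.2.1 p.2.2) {p | 0 ≤ p.1} ∧
  (∀ t : ℝ, 0 ≤ t → ContDiff ℝ 2 (fun p : Ed d × Ed d => f t p.1 p.2)) ∧
  (∀ x v : Ed d, ∀ t : ℝ, 0 < t → DifferentiableAt ℝ (fun τ => f τ x v) t)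

/-- global-in-time classical solution of the nonlinear equation. -/
def IsGlobalClassicalSolution (d : ℕ) (f : ℝ → Ed d → Ed d → ℝ) : Prop :=
  GlobalClassicalReg d f ∧ ∀ t : ℝ, 0 < t → SolvesVFP d f t

/-- squared Sobolev norm `‖g‖²_{H^s}` in the variables `(x,v)`. -/
def hsNormSq (d s : ℕ) (g : Ed d → Ed d → ℝ) : ℝ :=
  ∑ k ∈ Finset.range (s + 1),
    ∫ z : Ed d × Ed d, ‖iteratedFDeriv ℝ k (fun p : Ed d × Ed d => g p.1 p.2) z‖ ^ 2

/-- squared `L²_x` norm of the `k`-th spatial derivative of `g`. -/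
def xDerivL2Sq {X : Type*} [NormedAddCommGroup X] [NormedSpace ℝ X] (d : ℕ) (k : ℕ)
    (g : Ed d → X) : ℝ := ∫ x : Ed d, ‖iteratedFDeriv ℝ k g x‖ ^ 2

/-- `‖∇_x(a,b)‖²_{H^{s-1}}`. -/
def gradABNormSq (d s : ℕ) (g : Ed d → Ed d → ℝ) : ℝ :=
  ∑ k ∈ Finset.Icc 1 s, (xDerivL2Sq d k (macroA d g) + xDerivL2Sq d k (macroB d g))

/-- the mixed derivative `∇_x^k ∇_v^l g`. -/
def mixedDeriv (d k l : ℕ) (g : Ed d → Ed d → ℝ) (x v : Ed d) :=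
  iteratedFDeriv ℝ k (fun y => iteratedFDeriv ℝ l (fun w => g y w) v) x

/-- squared `L²_{x,v}` norm of `∇_x^k ∇_v^l g`. -/
def mixedL2Sq (d k l : ℕ) (g : Ed d → Ed d → ℝ) : ℝ :=
  ∫ x : Ed d, ∫ v : Ed d, ‖mixedDeriv d k l g x v‖ ^ 2

/-- squared weighted norm `‖∇_x^k ∇_v^l g‖²_μ`. -/
def mixedMuNormSq (d k l : ℕ) (g : Ed d → Ed d → ℝ) : ℝ :=
  ∫ x : Ed d, ∫ v : Ed d,
    (‖fderiv ℝ (fun w => mixedDeriv d k l g x w) v‖ ^ 2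
      + (1 + ‖v‖ ^ 2) * ‖mixedDeriv d k l g x v‖ ^ 2)

/-- `‖g‖²_{L²_v(H^s_x)}`. -/
def l2vHsSq (d s : ℕ) (g : Ed d → Ed d → ℝ) : ℝ :=
  ∑ k ∈ Finset.range (s + 1), mixedL2Sq d k 0 g

/-- `‖g‖²_{L²_v(L¹_x)}`. -/
def l2vL1Sq (d : ℕ) (g : Ed d → Ed d → ℝ) : ℝ :=
  ∫ v : Ed d, (∫ x : Ed d, |g x v|) ^ 2

/-- plain squared `L²_{x,v}` norm. -/
def l2Sq (d : ℕ) (g : Ed d → Ed d → ℝ) : ℝ :=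
  ∫ x : Ed d, ∫ v : Ed d, (g x v) ^ 2

/-- the moment functional `A_{ij}(g)(x) = ⟨(v_i v_j - 1)√M, g(x,·)⟩`. -/
def Aij (d : ℕ) (i j : Fin d) (g : Ed d → Ed d → ℝ) (x : Ed d) : ℝ :=
  ∫ v : Ed d, (v i * v j - 1) * sqrtM d v * g x v

/-- squared weighted norm `|g|²_μ = ∫ (|∇_v g|² + (1+|v|²)|g|²) dv` in velocity only. -/
def muNormSqV (d : ℕ) (g : Ed d → ℝ) : ℝ :=
  ∫ v : Ed d, (‖fderiv ℝ g v‖ ^ 2 + (1 + ‖v‖ ^ 2) * (g v) ^ 2)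

/-- `a^f = ⟨√M, f⟩`. -/
def aFv (d : ℕ) (g : Ed d → ℝ) : ℝ := ∫ v : Ed d, sqrtM d v * g v

/-- `{I - P₀} g` for a function of the velocity only, `P₀ g = a^g √M`. -/
def IminusP0v (d : ℕ) (g : Ed d → ℝ) (v : Ed d) : ℝ :=
  g v - aFv d g * sqrtM d v


open SchwartzMap
open scoped LineDeriv ContDiff

lemma aux_poly_exp_bound (k : ℕ) (r : ℝ) (hr : 0 ≤ r) :
    (1 + r) ^ k * Real.exp (-(1/4) * r ^ 2) ≤ Real.exp 2 * (k.factorial : ℝ) := by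
  have h1 : Real.exp (-(1/4) * r ^ 2) ≤ Real.exp 2 * Real.exp (-(1 + r)) := by
    rw [← Real.exp_add]
    apply Real.exp_le_exp.mpr
    nlinarith [sq_nonneg (r / 2 - 1)]
  have h2 : (1 + r) ^ k / (k.factorial : ℝ) ≤ Real.exp (1 + r) :=
    Real.pow_div_factorial_le_exp (1 + r) (by linarith) k
  have hk : (0 : ℝ) < k.factorial := by exact_mod_cast k.factorial_pos
  rw [div_le_iff₀ hk] at h2
  calc (1 + r) ^ k * Real.exp (-(1/4) * r ^ 2)
      ≤ (Real.exp (1 + r) * k.factorial) * (Real.exp 2 * Real.exp (-(1 + r))) := by gcongr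
    _ = (Real.exp (1 + r) * Real.exp (-(1 + r))) * (Real.exp 2 * k.factorial) := by ring
    _ = Real.exp 2 * (k.factorial : ℝ) := by rw [← Real.exp_add]; simp

/-- The Gaussian `exp(-|v|²/4)` as a Schwartz function. -/
def gaussS (d : ℕ) : SchwartzMap (Ed d) ℝ where
  toFun := fun v => Real.exp (-(1/4) * ‖v‖ ^ 2)
  smooth' := Real.contDiff_exp.comp (contDiff_const.mul (contDiff_norm_sq ℝ))
  decay' := by
    intro k n
    have hT : (fun v : Ed d => (-(1/4) : ℝ) * ‖v‖ ^ 2).HasTemperateGrowth :=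
      (Function.HasTemperateGrowth.const (-(1/4) : ℝ)).mul
        (Function.hasTemperateGrowth_norm_sq (H := Ed d))
    obtain ⟨l, C, hC, hb⟩ := hT.norm_iteratedFDeriv_le_uniform n
    refine ⟨n.factorial * (1 + C) ^ n * (Real.exp 2 * ((k + l * n).factorial : ℝ)), fun x => ?_⟩
    have key := norm_iteratedFDeriv_comp_le (𝕜 := ℝ) (g := Real.exp)
      (f := fun v : Ed d => (-(1/4) : ℝ) * ‖v‖ ^ 2) (n := n) (N := n) Real.contDiff_exp
      (contDiff_const.mul (contDiff_norm_sq ℝ)) le_rfl x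
      (C := Real.exp (-(1/4) * ‖x‖ ^ 2)) (D := (1 + C) * (1 + ‖x‖) ^ l)
      (fun i _ => by
        rw [norm_iteratedFDeriv_eq_norm_iteratedDeriv, iteratedDeriv_eq_iterate,
          Real.iter_deriv_exp, Real.norm_eq_abs, abs_of_pos (Real.exp_pos _)])
      (fun i hi hin => by
        have h1 : (1 : ℝ) ≤ (1 + C) * (1 + ‖x‖) ^ l :=
          one_le_mul_of_one_le_of_one_le (by linarith)
            (one_le_pow₀ (by linarith [norm_nonneg x]))
        calc _ ≤ C * (1 + ‖x‖) ^ l := hb i hin x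
          _ ≤ (1 + C) * (1 + ‖x‖) ^ l := by gcongr; linarith
          _ ≤ _ := le_self_pow₀ h1 (by omega))
    have hx := norm_nonneg x
    have hfun : (fun v : Ed d => Real.exp (-(1/4) * ‖v‖ ^ 2))
        = Real.exp ∘ (fun v : Ed d => (-(1/4) : ℝ) * ‖v‖ ^ 2) := rfl
    rw [hfun]
    calc ‖x‖ ^ k * _ ≤ (1 + ‖x‖) ^ k * (n.factorial * Real.exp (-(1/4) * ‖x‖ ^ 2)
            * ((1 + C) * (1 + ‖x‖) ^ l) ^ n) := by
          gcongr
          linarith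
      _ = n.factorial * (1 + C) ^ n * ((1 + ‖x‖) ^ (k + l * n) * Real.exp (-(1/4) * ‖x‖ ^ 2)) := by
          rw [mul_pow, ← pow_mul, pow_add]; ring
      _ ≤ _ := by
          exact mul_le_mul_of_nonneg_left (aux_poly_exp_bound _ _ hx) (by positivity)

/-- `√M` as a Schwartz function. -/
def mS (d : ℕ) : SchwartzMap (Ed d) ℝ := Real.sqrt ((2 * π) ^ (-(d : ℝ) / 2)) • gaussS d

lemma gaussS_apply (d : ℕ) (v : Ed d) : gaussS d v = Real.exp (-(1/4) * ‖v‖ ^ 2) := rfl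

lemma mS_apply' (d : ℕ) (v : Ed d) :
    mS d v = Real.sqrt ((2 * π) ^ (-(d : ℝ) / 2)) * Real.exp (-(1/4) * ‖v‖ ^ 2) := by
  simp [mS, gaussS_apply]

lemma mS_apply (d : ℕ) (v : Ed d) : mS d v = sqrtM d v := by
  rw [mS_apply', sqrtM, maxw, Real.sqrt_mul (by positivity), Real.sqrt_eq_rpow (Real.exp _),
    ← Real.exp_mul]
  congr 2; ring

lemma mS_sq (d : ℕ) (v : Ed d) : mS d v ^ 2 = maxw d v := by
  rw [mS_apply, sqrtM, Real.sq_sqrt]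
  unfold maxw; positivity

lemma integral_mS_sq (d : ℕ) : ∫ v, mS d v ^ 2 = 1 := by
  simp_rw [mS_sq, maxw]
  rw [integral_const_mul]
  have h := GaussianFourier.integral_rexp_neg_mul_sq_norm (V := Ed d) (b := 1/2) (by norm_num)
  have h2 : ∀ v : Ed d, -‖v‖ ^ 2 / 2 = -(1/2) * ‖v‖ ^ 2 := fun v => by ring
  simp_rw [h2, h]
  rw [finrank_euclideanSpace_fin, show π / (1/2) = 2 * π by ring, ← Real.rpow_add (by positivity)]
  rw [show -(d : ℝ) / 2 + d / 2 = 0 by ring, Real.rpow_zero]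

/-- coordinate vector -/
def eb (d : ℕ) (i : Fin d) : Ed d := EuclideanSpace.single i 1

/-- multiplication by a coordinate -/
def XS (d : ℕ) (i : Fin d) (f : SchwartzMap (Ed d) ℝ) : SchwartzMap (Ed d) ℝ :=
  SchwartzMap.smulLeftCLM ℝ (fun v : Ed d => inner ℝ (eb d i) v) f

lemma XS_apply (d : ℕ) (i : Fin d) (f : SchwartzMap (Ed d) ℝ) (v : Ed d) :
    XS d i f v = v i * f v := by
  rw [XS, SchwartzMap.smulLeftCLM_apply_apply (Function.hasTemperateGrowth_inner_right _)]
  simp [eb, EuclideanSpace.inner_single_left]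

/-- partial derivative -/
def DS (d : ℕ) (i : Fin d) (f : SchwartzMap (Ed d) ℝ) : SchwartzMap (Ed d) ℝ := ∂_{eb d i} f

lemma DS_apply (d : ℕ) (i : Fin d) (f : SchwartzMap (Ed d) ℝ) (v : Ed d) :
    DS d i f v = fderiv ℝ f v (eb d i) := rfl

/-- annihilation operator -/
def AS (d : ℕ) (i : Fin d) (f : SchwartzMap (Ed d) ℝ) : SchwartzMap (Ed d) ℝ :=
  DS d i f + (1/2 : ℝ) • XS d i f

lemma AS_apply (d : ℕ) (i : Fin d) (f : SchwartzMap (Ed d) ℝ) (v : Ed d) :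
    AS d i f v = DS d i f v + (1/2) * (v i * f v) := by
  simp [AS, XS_apply]

lemma integrable_mulS {d : ℕ} (f g : SchwartzMap (Ed d) ℝ) :
    Integrable (fun v => f v * g v) :=
  (SchwartzMap.pairing (ContinuousLinearMap.mul ℝ ℝ) f g).integrable

lemma integrable_sqS {d : ℕ} (f : SchwartzMap (Ed d) ℝ) :
    Integrable (fun v => f v ^ 2) := by
  simpa [sq] using integrable_mulS f f

lemma ibpS {d : ℕ} (i : Fin d) (f g : SchwartzMap (Ed d) ℝ) :
    ∫ v, f v * DS d i g v = - ∫ v, DS d i f v * g v :=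
  SchwartzMap.integral_mul_lineDerivOp_right_eq_neg_left f g (eb d i)

lemma DS_XS {d : ℕ} (i : Fin d) (f : SchwartzMap (Ed d) ℝ) (v : Ed d) :
    DS d i (XS d i f) v = f v + v i * DS d i f v := by
  have h1 : HasFDerivAt (fun w : Ed d => w i) (EuclideanSpace.proj (𝕜 := ℝ) i) v :=
    (EuclideanSpace.proj (𝕜 := ℝ) i : Ed d →L[ℝ] ℝ).hasFDerivAt
  have h2 : HasFDerivAt (fun w : Ed d => w i * f w) _ v := h1.mul (f.hasFDerivAt v)
  have h3 : ⇑(XS d i f) = fun w => w i * f w := funext fun w => XS_apply d i f w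
  rw [DS_apply, h3, h2.fderiv, DS_apply]
  simp [eb]
  ring

lemma mS_deriv {d : ℕ} (v w : Ed d) : fderiv ℝ (mS d) v w = -(1/2) * inner ℝ v w * mS d v := by
  have h3 : ⇑(mS d) = fun v => Real.sqrt ((2 * π) ^ (-(d : ℝ) / 2)) * Real.exp (-(1/4) * ‖v‖ ^ 2) :=
    funext fun w => mS_apply' d w
  have h1 : HasFDerivAt (fun v : Ed d => ‖v‖ ^ 2) (2 • innerSL ℝ v) v :=
    (hasStrictFDerivAt_norm_sq v).hasFDerivAt
  have h2 := ((h1.const_mul (-(1/4))).exp).const_mul (Real.sqrt ((2 * π) ^ (-(d : ℝ) / 2)))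
  rw [h3, h2.fderiv]
  simp
  ring

lemma AS_mS {d : ℕ} (i : Fin d) (v : Ed d) : AS d i (mS d) v = 0 := by
  rw [AS_apply, DS_apply, mS_deriv]
  simp [eb, EuclideanSpace.inner_single_right]
  ring

lemma cross_int {d : ℕ} (i : Fin d) (f : SchwartzMap (Ed d) ℝ) :
    ∫ v, DS d i f v * XS d i f v = -(1/2) * ∫ v, f v ^ 2 := by
  have h := ibpS i f (XS d i f)
  have h1 : ∀ v, f v * DS d i (XS d i f) v = f v ^ 2 + DS d i f v * XS d i f v := by
    intro v; rw [DS_XS, XS_apply]; ring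
  simp_rw [h1] at h
  rw [integral_add (integrable_sqS f) (integrable_mulS _ _)] at h
  linarith

lemma AS_sq_int {d : ℕ} (i : Fin d) (f : SchwartzMap (Ed d) ℝ) :
    (∫ v, AS d i f v ^ 2) = (∫ v, DS d i f v ^ 2) - (1/2) * (∫ v, f v ^ 2)
      + (1/4) * (∫ v, XS d i f v ^ 2) := by
  have h1 : ∀ v, AS d i f v ^ 2 = DS d i f v ^ 2 + DS d i f v * XS d i f v
      + (1/4) * XS d i f v ^ 2 := by
    intro v; rw [AS_apply, XS_apply]; ring
  simp_rw [h1]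
  rw [integral_add (f := fun v => DS d i f v ^ 2 + DS d i f v * XS d i f v)
      ((integrable_sqS _).add (integrable_mulS _ _)) ((integrable_sqS _).const_mul _),
    integral_add (integrable_sqS _) (integrable_mulS _ _), cross_int, integral_const_mul]
  ring

lemma norm_sq_coord {d : ℕ} (v : Ed d) : ‖v‖ ^ 2 = ∑ i, v i ^ 2 := by
  rw [EuclideanSpace.norm_sq_eq]; simp

lemma norm_sq_fderivS {d : ℕ} (L : Ed d →L[ℝ] ℝ) : ‖L‖ ^ 2 = ∑ i, L (eb d i) ^ 2 := by
  set w := (InnerProductSpace.toDual ℝ (Ed d)).symm L with hw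
  have h1 : ‖w‖ = ‖L‖ := LinearIsometryEquiv.norm_map _ _
  have h2 : ∀ x, L x = inner ℝ w x := fun x => by
    rw [hw, InnerProductSpace.toDual_symm_apply]
  rw [← h1, norm_sq_coord]
  congr 1; ext i
  rw [h2]
  simp [eb, EuclideanSpace.inner_single_right]

/-- Dirichlet form -/
def QS (d : ℕ) (f : SchwartzMap (Ed d) ℝ) : ℝ := ∑ i, ∫ v, AS d i f v ^ 2

lemma fpL_int {d : ℕ} (f : SchwartzMap (Ed d) ℝ) :
    - (∫ v : Ed d, fpL d (⇑f) v * f v) = QS d f := by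
  have h1 : ∀ v, fpL d (⇑f) v * f v =
      ∑ i, (f v * DS d i (DS d i f) v + (1/2) * f v ^ 2 - (1/4) * XS d i f v ^ 2) := by
    intro v
    have h2 : lapv d (⇑f) v = ∑ i, DS d i (DS d i f) v := rfl
    rw [fpL, h2, norm_sq_coord]
    simp_rw [XS_apply, mul_pow]
    rw [Finset.sum_sub_distrib, Finset.sum_add_distrib, ← Finset.mul_sum, ← Finset.mul_sum,
      ← Finset.mul_sum, ← Finset.sum_mul]
    simp
    ring
  have hi : ∀ i, Integrable (fun v => f v * DS d i (DS d i f) v + (1/2) * f v ^ 2) := fun i =>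
    (integrable_mulS _ _).add ((integrable_sqS _).const_mul _)
  have hi2 : ∀ i, Integrable (fun v => f v * DS d i (DS d i f) v + (1/2) * f v ^ 2
      - (1/4) * XS d i f v ^ 2) := fun i => (hi i).sub ((integrable_sqS _).const_mul _)
  simp_rw [h1]
  rw [integral_finsetSum _ (fun i _ => hi2 i), QS,
    ← Finset.sum_neg_distrib]
  refine Finset.sum_congr rfl fun i _ => ?_
  rw [integral_sub (hi i) ((integrable_sqS _).const_mul _),
    integral_add (integrable_mulS _ _) ((integrable_sqS _).const_mul _), ibpS, AS_sq_int,
    integral_const_mul, integral_const_mul]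
  simp_rw [← sq]
  ring

lemma muNorm_eq {d : ℕ} (g : SchwartzMap (Ed d) ℝ) :
    muNormSqV d (⇑g) = 4 * QS d g + (2 * d + 1) * (∫ v, g v ^ 2)
      - 3 * ∑ i, ∫ v, DS d i g v ^ 2 := by
  have h1 : ∀ v, ‖fderiv ℝ g v‖ ^ 2 + (1 + ‖v‖ ^ 2) * (g v) ^ 2 =
      ∑ i, (DS d i g v ^ 2 + XS d i g v ^ 2) + g v ^ 2 := by
    intro v
    rw [norm_sq_fderivS, norm_sq_coord]
    simp_rw [XS_apply, mul_pow, DS_apply]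
    rw [Finset.sum_add_distrib, ← Finset.sum_mul]
    ring
  have hi : ∀ i, Integrable (fun v => DS d i g v ^ 2 + XS d i g v ^ 2) := fun i =>
    (integrable_sqS _).add (integrable_sqS _)
  rw [muNormSqV]
  simp_rw [h1]
  rw [integral_add (integrable_finsetSum _ fun i _ => hi i) (integrable_sqS _),
    integral_finsetSum _ (fun i _ => hi i), QS]
  simp_rw [AS_sq_int, integral_add (integrable_sqS _) (integrable_sqS _)]
  rw [Finset.sum_add_distrib, Finset.sum_add_distrib, Finset.sum_sub_distrib, ← Finset.mul_sum,
    ← Finset.mul_sum]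
  simp
  ring

lemma muNorm_le {d : ℕ} (g : SchwartzMap (Ed d) ℝ) :
    muNormSqV d (⇑g) ≤ 4 * QS d g + (2 * d + 1) * (∫ v, g v ^ 2) := by
  rw [muNorm_eq]
  have : 0 ≤ ∑ i, ∫ v, DS d i g v ^ 2 :=
    Finset.sum_nonneg fun i _ => integral_nonneg fun v => sq_nonneg _
  linarith

lemma QS_nonneg {d : ℕ} (g : SchwartzMap (Ed d) ℝ) : 0 ≤ QS d g :=
  Finset.sum_nonneg fun i _ => integral_nonneg fun v => sq_nonneg _

lemma QS_sub {d : ℕ} (f : SchwartzMap (Ed d) ℝ) (a : ℝ) : QS d (f - a • mS d) = QS d f := by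
  unfold QS
  congr 1; ext i
  congr 1; ext v
  congr 1
  have h1 := AS_mS i v
  have h2 : DS d i (f - a • mS d) = DS d i f - a • DS d i (mS d) := by
    unfold DS
    rw [sub_eq_add_neg, ← neg_smul, LineDeriv.lineDerivOp_add, LineDeriv.lineDerivOp_smul, neg_smul, ← sub_eq_add_neg]
  rw [AS_apply] at h1 ⊢
  rw [h2, AS_apply]
  simp
  linear_combination (-a) * h1

/-- rotation in `ℝ^d × ℝ^d` -/
def rotL (d : ℕ) (t : ℝ) : (Ed d × Ed d) →ₗ[ℝ] (Ed d × Ed d) :=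
  LinearMap.prod
    (Real.cos t • LinearMap.fst ℝ (Ed d) (Ed d) + Real.sin t • LinearMap.snd ℝ (Ed d) (Ed d))
    (-Real.sin t • LinearMap.fst ℝ (Ed d) (Ed d) + Real.cos t • LinearMap.snd ℝ (Ed d) (Ed d))

lemma rotL_apply (d : ℕ) (t : ℝ) (z : Ed d × Ed d) :
    rotL d t z = (Real.cos t • z.1 + Real.sin t • z.2, -Real.sin t • z.1 + Real.cos t • z.2) := rfl

/-- swap of the two factors -/
def swapL (d : ℕ) : (Ed d × Ed d) →ₗ[ℝ] (Ed d × Ed d) :=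
  LinearMap.prod (LinearMap.snd ℝ (Ed d) (Ed d)) (LinearMap.fst ℝ (Ed d) (Ed d))

lemma rotL_det (d : ℕ) (t : ℝ) : LinearMap.det (rotL d t) ^ 2 = 1 := by
  have h1 : swapL d ∘ₗ swapL d = LinearMap.id := rfl
  have h2 : rotL d t ∘ₗ (swapL d ∘ₗ (rotL d t ∘ₗ swapL d)) = LinearMap.id := by
    apply LinearMap.ext
    rintro ⟨x, y⟩
    have hs := Real.sin_sq_add_cos_sq t
    simp only [LinearMap.comp_apply, swapL, rotL_apply, LinearMap.prod_apply, Pi.prod,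
      LinearMap.fst_apply, LinearMap.snd_apply, LinearMap.id_apply]
    ext i
    · simp
      linear_combination (x i) * hs
    · simp
      linear_combination (y i) * hs
  have h3 := congrArg LinearMap.det h1
  have h4 := congrArg LinearMap.det h2
  simp only [LinearMap.det_comp, LinearMap.det_id] at h3 h4
  linear_combination h4 - LinearMap.det (rotL d t) ^ 2 * h3

lemma rotL_map (d : ℕ) (t : ℝ) :
    Measure.map (rotL d t) (volume : Measure (Ed d × Ed d)) = volume := by
  have h := rotL_det d t
  have h0 : LinearMap.det (rotL d t) ≠ 0 := by intro h0; rw [h0] at h; norm_num at h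
  haveI : (volume : Measure (Ed d × Ed d)).IsAddHaarMeasure :=
    inferInstanceAs (((volume : Measure (Ed d)).prod (volume : Measure (Ed d))).IsAddHaarMeasure)
  rw [Measure.map_linearMap_addHaar_eq_smul_addHaar _ h0]
  have : |(LinearMap.det (rotL d t))⁻¹| = 1 := by
    rcases mul_self_eq_one_iff.mp ((sq _).symm.trans h) with h | h <;> simp [h]
  simp [this]

lemma rot_cont (d : ℕ) : Continuous (fun p : ℝ × (Ed d × Ed d) => rotL d p.1 p.2) := by
  simp only [rotL_apply]
  fun_prop

lemma rot_cont_t (d : ℕ) (z : Ed d × Ed d) : Continuous (fun t : ℝ => rotL d t z) := by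
  simp only [rotL_apply]
  fun_prop

lemma rot_cont_z (d : ℕ) (t : ℝ) : Continuous (fun z : Ed d × Ed d => rotL d t z) := by
  simp only [rotL_apply]
  fun_prop

/-- the derivative along rotations -/
def PsiS {d : ℕ} (f : SchwartzMap (Ed d) ℝ) (z : Ed d × Ed d) : ℝ :=
  (∑ i, AS d i f z.1 * z.2 i) * mS d z.2

lemma PsiS_cont {d : ℕ} (f : SchwartzMap (Ed d) ℝ) : Continuous (PsiS f) := by
  unfold PsiS
  have h1 : ∀ i, Continuous (AS d i f) := fun i => (AS d i f).continuous
  have h2 : Continuous (mS d) := (mS d).continuous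
  fun_prop

/-- the tensor `f ⊗ √M` -/
def PhiS {d : ℕ} (f : SchwartzMap (Ed d) ℝ) (z : Ed d × Ed d) : ℝ := f z.1 * mS d z.2

lemma fderiv_eq_sum {d : ℕ} (L : Ed d →L[ℝ] ℝ) (w : Ed d) : L w = ∑ i, L (eb d i) * w i := by
  have h : w = ∑ i, w i • eb d i := by
    ext j
    simp [eb, Finset.sum_apply, Pi.single_apply]
  conv_lhs => rw [h]
  simp [mul_comm]

lemma Phi_deriv {d : ℕ} (f : SchwartzMap (Ed d) ℝ) (z : Ed d × Ed d) (t : ℝ) :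
    HasDerivAt (fun s => PhiS f (rotL d s z)) (PsiS f (rotL d t z)) t := by
  have hx : HasDerivAt (fun s => Real.cos s • z.1 + Real.sin s • z.2)
      (-Real.sin t • z.1 + Real.cos t • z.2) t :=
    ((Real.hasDerivAt_cos t).smul_const z.1).add ((Real.hasDerivAt_sin t).smul_const z.2)
  have hy : HasDerivAt (fun s => -Real.sin s • z.1 + Real.cos s • z.2)
      (-Real.cos t • z.1 + -Real.sin t • z.2) t :=
    ((Real.hasDerivAt_sin t).neg.smul_const z.1).add ((Real.hasDerivAt_cos t).smul_const z.2)
  have h1 := (f.hasFDerivAt (Real.cos t • z.1 + Real.sin t • z.2)).comp_hasDerivAt t hx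
  have h2 := ((mS d).hasFDerivAt (-Real.sin t • z.1 + Real.cos t • z.2)).comp_hasDerivAt t hy
  have h3 := h1.mul h2
  refine HasDerivAt.congr_deriv (f := fun s => PhiS f (rotL d s z)) h3 ?_
  simp only [PsiS, rotL_apply, Function.comp]
  set x := Real.cos t • z.1 + Real.sin t • z.2 with hxd
  set y := -Real.sin t • z.1 + Real.cos t • z.2 with hyd
  have hxy : -Real.cos t • z.1 + -Real.sin t • z.2 = -x := by rw [hxd]; module
  rw [hxy, mS_deriv]
  simp_rw [AS_apply, DS_apply, add_mul]
  rw [Finset.sum_add_distrib, ← fderiv_eq_sum, inner_neg_right]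
  have hin : inner ℝ y x = ∑ i, x i * y i := by
    simp [PiLp.inner_apply]
  have : ∑ i, 1 / 2 * (x i * f x) * y i = (1/2) * f x * inner ℝ y x := by
    rw [hin, Finset.mul_sum]
    refine Finset.sum_congr rfl fun i _ => ?_
    ring
  rw [this]
  ring

lemma cs_interval (h : ℝ → ℝ) (hc : Continuous h) :
    (∫ t in (0:ℝ)..(π/2), h t) ^ 2 ≤ (π/2) * ∫ t in (0:ℝ)..(π/2), h t ^ 2 := by
  set I := ∫ t in (0:ℝ)..(π/2), h t with hI
  have hp := Real.pi_pos
  have h0 : 0 ≤ ∫ t in (0:ℝ)..(π/2), (h t - I / (π/2)) ^ 2 :=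
    intervalIntegral.integral_nonneg (by positivity) fun t _ => sq_nonneg _
  have h1 : ∀ t, (h t - I / (π/2)) ^ 2 = h t ^ 2 - 2 * (I / (π/2)) * h t + (I / (π/2)) ^ 2 :=
    fun t => by ring
  simp_rw [h1] at h0
  rw [intervalIntegral.integral_add, intervalIntegral.integral_sub,
    intervalIntegral.integral_const_mul, intervalIntegral.integral_const, ← hI] at h0
  · simp only [sub_zero, smul_eq_mul] at h0
    have h2 : (∫ t in (0:ℝ)..(π/2), h t ^ 2) - I ^ 2 / (π/2) ≥ 0 := by
      have : I ^ 2 / (π/2) = 2 * (I / (π/2)) * I - π / 2 * (I / (π/2)) ^ 2 := by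
        field_simp; ring
      linarith
    have h3 : I ^ 2 / (π/2) ≤ ∫ t in (0:ℝ)..(π/2), h t ^ 2 := by linarith
    rw [div_le_iff₀ (by positivity)] at h3
    linarith
  all_goals exact Continuous.intervalIntegrable (by fun_prop) _ _

lemma Psi_sq_le {d : ℕ} (f : SchwartzMap (Ed d) ℝ) (z : Ed d × Ed d) :
    PsiS f z ^ 2 ≤ (∑ i, AS d i f z.1 ^ 2) * (∑ i, XS d i (mS d) z.2 ^ 2) := by
  simp_rw [XS_apply, mul_pow]
  rw [PsiS, mul_pow, ← Finset.sum_mul, ← mul_assoc]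
  exact mul_le_mul_of_nonneg_right (Finset.sum_mul_sq_le_sq_mul_sq _ _ _) (sq_nonneg _)

lemma int_sum_AS {d : ℕ} (f : SchwartzMap (Ed d) ℝ) :
    Integrable (fun v => ∑ i, AS d i f v ^ 2) :=
  integrable_finsetSum _ fun _ _ => integrable_sqS _

lemma int_sum_XS {d : ℕ} (f : SchwartzMap (Ed d) ℝ) :
    Integrable (fun v => ∑ i, XS d i f v ^ 2) :=
  integrable_finsetSum _ fun _ _ => integrable_sqS _

/-- second moment of the Maxwellian -/
def KS (d : ℕ) : ℝ := ∫ v, ∑ i, XS d i (mS d) v ^ 2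

lemma KS_nonneg (d : ℕ) : 0 ≤ KS d :=
  integral_nonneg fun _ => Finset.sum_nonneg fun _ _ => sq_nonneg _

lemma Psi_dom_int {d : ℕ} (f : SchwartzMap (Ed d) ℝ) :
    Integrable (fun z : Ed d × Ed d =>
      (∑ i, AS d i f z.1 ^ 2) * (∑ i, XS d i (mS d) z.2 ^ 2)) :=
  (int_sum_AS f).mul_prod (int_sum_XS (mS d))

lemma Psi_int {d : ℕ} (f : SchwartzMap (Ed d) ℝ) :
    Integrable (fun z : Ed d × Ed d => PsiS f z ^ 2) := by
  refine (Psi_dom_int f).mono' ((PsiS_cont f).pow 2).aestronglyMeasurable ?_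
  refine Filter.Eventually.of_forall fun z => ?_
  rw [Real.norm_eq_abs, abs_of_nonneg (sq_nonneg _)]
  exact Psi_sq_le f z

lemma Psi_int_le {d : ℕ} (f : SchwartzMap (Ed d) ℝ) :
    ∫ z : Ed d × Ed d, PsiS f z ^ 2 ≤ QS d f * KS d := by
  refine (integral_mono (Psi_int f) (Psi_dom_int f) (Psi_sq_le f)).trans (le_of_eq ?_)
  have := integral_prod_mul (μ := (volume : Measure (Ed d))) (ν := (volume : Measure (Ed d)))
    (fun v => ∑ i, AS d i f v ^ 2) (fun v => ∑ i, XS d i (mS d) v ^ 2)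
  rw [← Measure.volume_eq_prod] at this
  rw [this, integral_finsetSum _ fun _ _ => integrable_sqS _]
  rfl

lemma ptS {d : ℕ} (f : SchwartzMap (Ed d) ℝ) (z : Ed d × Ed d) :
    (f z.2 * mS d z.1 - f z.1 * mS d z.2) ^ 2
      ≤ (π/2) * ∫ t in Set.Ioc (0:ℝ) (π/2), PsiS f (rotL d t z) ^ 2 := by
  have hp := Real.pi_pos
  have hcont : Continuous (fun t => PsiS f (rotL d t z)) :=
    (PsiS_cont f).comp (rot_cont_t d z)
  have hft : ∫ t in (0:ℝ)..(π/2), PsiS f (rotL d t z)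
      = PhiS f (rotL d (π/2) z) - PhiS f (rotL d 0 z) :=
    intervalIntegral.integral_eq_sub_of_hasDerivAt (f := fun t => PhiS f (rotL d t z))
      (fun t _ => Phi_deriv f z t) (hcont.intervalIntegrable _ _)
  have hcs := cs_interval (fun t => PsiS f (rotL d t z)) hcont
  rw [hft] at hcs
  rw [← intervalIntegral.integral_of_le (by positivity)]
  refine le_trans (le_of_eq ?_) hcs
  have hm : mS d (-z.1) = mS d z.1 := by rw [mS_apply', mS_apply', norm_neg]
  simp [PhiS, rotL_apply, hm]

lemma poincareS {d : ℕ} (f : SchwartzMap (Ed d) ℝ) (hf : ∫ v, mS d v * f v = 0) :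
    2 * ∫ v, f v ^ 2 ≤ (π/2) ^ 2 * KS d * QS d f := by
  have hp := Real.pi_pos
  -- left-hand side
  have hLi1 : Integrable (fun z : Ed d × Ed d => f z.1 ^ 2 * mS d z.2 ^ 2) :=
    (integrable_sqS f).mul_prod (integrable_sqS (mS d))
  have hLi2 : Integrable (fun z : Ed d × Ed d => mS d z.1 ^ 2 * f z.2 ^ 2) :=
    (integrable_sqS (mS d)).mul_prod (integrable_sqS f)
  have hLi3 : Integrable (fun z : Ed d × Ed d => (mS d z.1 * f z.1) * (mS d z.2 * f z.2)) :=
    (integrable_mulS (mS d) f).mul_prod (integrable_mulS (mS d) f)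
  have hLe : ∀ z : Ed d × Ed d, (f z.2 * mS d z.1 - f z.1 * mS d z.2) ^ 2
      = f z.1 ^ 2 * mS d z.2 ^ 2 + mS d z.1 ^ 2 * f z.2 ^ 2
        - 2 * ((mS d z.1 * f z.1) * (mS d z.2 * f z.2)) := fun z => by ring
  have hLi12 : Integrable (fun z : Ed d × Ed d =>
      f z.1 ^ 2 * mS d z.2 ^ 2 + mS d z.1 ^ 2 * f z.2 ^ 2) := hLi1.add hLi2
  have hLi : Integrable (fun z : Ed d × Ed d => (f z.2 * mS d z.1 - f z.1 * mS d z.2) ^ 2) := by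
    simp_rw [hLe]
    exact hLi12.sub (hLi3.const_mul 2)
  have e1 : ∫ z : Ed d × Ed d, f z.1 ^ 2 * mS d z.2 ^ 2 = ∫ v, f v ^ 2 := by
    have := integral_prod_mul (μ := (volume : Measure (Ed d))) (ν := (volume : Measure (Ed d)))
      (fun v => f v ^ 2) (fun v => mS d v ^ 2)
    rw [← Measure.volume_eq_prod] at this
    rw [this, integral_mS_sq, mul_one]
  have e2 : ∫ z : Ed d × Ed d, mS d z.1 ^ 2 * f z.2 ^ 2 = ∫ v, f v ^ 2 := by
    have := integral_prod_mul (μ := (volume : Measure (Ed d))) (ν := (volume : Measure (Ed d)))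
      (fun v => mS d v ^ 2) (fun v => f v ^ 2)
    rw [← Measure.volume_eq_prod] at this
    rw [this, integral_mS_sq, one_mul]
  have e3 : ∫ z : Ed d × Ed d, (mS d z.1 * f z.1) * (mS d z.2 * f z.2) = 0 := by
    have := integral_prod_mul (μ := (volume : Measure (Ed d))) (ν := (volume : Measure (Ed d)))
      (fun v => mS d v * f v) (fun v => mS d v * f v)
    rw [← Measure.volume_eq_prod] at this
    rw [this, hf, mul_zero]
  have hL : ∫ z : Ed d × Ed d, (f z.2 * mS d z.1 - f z.1 * mS d z.2) ^ 2
      = 2 * ∫ v, f v ^ 2 := by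
    simp_rw [hLe]
    rw [integral_sub hLi12 (hLi3.const_mul 2), integral_add hLi1 hLi2, integral_const_mul,
      e1, e2, e3]
    ring
  -- pointwise bound
  have hpt := fun z => ptS f z
  -- Fubini
  set ν : Measure ℝ := volume.restrict (Set.Ioc (0:ℝ) (π/2)) with hν
  have hmp : MeasurePreserving (fun p : ℝ × (Ed d × Ed d) => (p.1, rotL d p.1 p.2))
      (ν.prod volume) (ν.prod volume) :=
    MeasurePreserving.skew_product (f := id) (g := fun t z => rotL d t z) (MeasurePreserving.id ν)
      (rot_cont d).measurable (Filter.Eventually.of_forall fun t => rotL_map d t)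
  have hbase : Integrable (fun p : ℝ × (Ed d × Ed d) => PsiS f p.2 ^ 2) (ν.prod volume) :=
    (Psi_int f).comp_snd ν
  have hF : Integrable (fun p : ℝ × (Ed d × Ed d) => PsiS f (rotL d p.1 p.2) ^ 2)
      (ν.prod volume) := hmp.integrable_comp_of_integrable hbase
  have hF' : Integrable (fun p : (Ed d × Ed d) × ℝ => PsiS f (rotL d p.2 p.1) ^ 2)
      (Measure.prod volume ν) := hF.swap
  have hR : ∫ z : Ed d × Ed d, ∫ t, PsiS f (rotL d t z) ^ 2 ∂ν
      = (π/2) * ∫ z : Ed d × Ed d, PsiS f z ^ 2 := by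
    rw [integral_integral_swap hF']
    have : ∀ t, ∫ z : Ed d × Ed d, PsiS f (rotL d t z) ^ 2 = ∫ z : Ed d × Ed d, PsiS f z ^ 2 := by
      intro t
      have hmeas := rot_cont_z d t
      have h := integral_map (μ := (volume : Measure (Ed d × Ed d))) (φ := fun z => rotL d t z)
        hmeas.aemeasurable (f := fun z => PsiS f z ^ 2)
        ((PsiS_cont f).pow 2).aestronglyMeasurable
      rw [← h]
      congr 1
      exact (rotL_map d t).symm ▸ rfl
    simp_rw [this]
    rw [integral_const]
    simp [hν, Measure.real, hp.le]
    left; linarith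
  rw [← hL]
  calc _ ≤ ∫ z : Ed d × Ed d, (π/2) * ∫ t, PsiS f (rotL d t z) ^ 2 ∂ν :=
        integral_mono hLi (hF'.integral_prod_left.const_mul _) hpt
    _ = (π/2) * ((π/2) * ∫ z : Ed d × Ed d, PsiS f z ^ 2) := by rw [integral_const_mul, hR]
    _ ≤ (π/2) * ((π/2) * (QS d f * KS d)) := by gcongr; exact Psi_int_le f
    _ = _ := by ring

/-- Proposition 2.1 (iii).

There exists `λ₀ > 0` such that `-⟨L f, f⟩ ≥ λ₀ |{I - P₀} f|²_μ` for all suitable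
(here: Schwartz) `f`, where `P₀ f = a^f √M` with `a^f = ⟨√M, f⟩`. -/
theorem fokkerPlanck_coercivity_P0 (d : ℕ) (hd : 1 ≤ d) :
    ∃ lam0 > (0 : ℝ), ∀ f : SchwartzMap (Ed d) ℝ,
      - (∫ v : Ed d, fpL d (⇑f) v * f v)
        ≥ lam0 * muNormSqV d (IminusP0v d (⇑f)) := by
  have hK := KS_nonneg d
  set B : ℝ := 4 + (2 * d + 1) * ((π/2) ^ 2 * KS d) with hB
  have hBpos : 0 < B := by positivity
  refine ⟨B⁻¹, by positivity, fun f => ?_⟩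
  rw [fpL_int]
  set a := aFv d (⇑f) with ha
  set g : SchwartzMap (Ed d) ℝ := f - a • mS d with hg
  have hgf : IminusP0v d (⇑f) = ⇑g := by
    ext v
    simp [IminusP0v, hg, ← ha, mS_apply]
  have hg0 : ∫ v, mS d v * g v = 0 := by
    have h1 : ∀ v, mS d v * g v = mS d v * f v - a * mS d v ^ 2 := by
      intro v; simp [hg]; ring
    simp_rw [h1]
    rw [integral_sub (integrable_mulS _ _) ((integrable_sqS _).const_mul _), integral_const_mul,
      integral_mS_sq, ha, aFv]
    simp_rw [mS_apply]
    ring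
  have hP := poincareS g hg0
  have hQ : QS d g = QS d f := QS_sub f a
  have hM := muNorm_le g
  have hQ0 := QS_nonneg f
  rw [hQ] at hP hM
  rw [hgf, ge_iff_le, inv_mul_le_iff₀ hBpos]
  have hN : 0 ≤ ∫ v, g v ^ 2 := integral_nonneg fun v => sq_nonneg _
  have h3 : ∫ v, g v ^ 2 ≤ (π/2) ^ 2 * KS d * QS d f := by linarith
  calc muNormSqV d (⇑g) ≤ 4 * QS d f + (2 * d + 1) * (∫ v, g v ^ 2) := hM
    _ ≤ 4 * QS d f + (2 * d + 1) * ((π/2) ^ 2 * KS d * QS d f) := by gcongr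
    _ = B * QS d f := by rw [hB]; ring
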